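/- Let Γ be a nonempty finite simple graph such that the outer automorphism group Out(A_Γ) is finite. Then Γ is connected. -/

import Mathlib

open scoped commutatorElement

/-- The set of relators of a right-angled Artin group: commutators of adjacent vertices. -/
def raagRels {V : Type*} (Γ : SimpleGraph V) : Set (FreeGroup V) :=
  {r | ∃ v w : V, Γ.Adj v w ∧ r = ⁅FreeGroup.of v, FreeGroup.of w⁆}

/-- The right-angled Artin group of a simple graph. -/
abbrev RAAG {V : Type*} (Γ : SimpleGraph V) : Type _ := PresentedGroup (raagRels Γ)

instance conjRangeNormal (G : Type*) [Group G] :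
    ((MulAut.conj : G →* MulAut G).range).Normal := by
  constructor
  rintro - ⟨g, rfl⟩ φ
  refine ⟨φ g, ?_⟩
  ext x
  simp [MulAut.conj_apply, mul_assoc]

/-- The outer automorphism group of a group: the quotient of the automorphism group
by the inner automorphisms. -/
def Out (G : Type*) [Group G] : Type _ :=
  MulAut G ⧸ (MulAut.conj : G →* MulAut G).range

instance (G : Type*) [Group G] : Group (Out G) :=
  QuotientGroup.Quotient.group _

/-!
If `φ` is an automorphism of `A_Γ` no positive power of which is inner, then `Out(A_Γ)` is not a
torsion group. Two kinds of automorphisms have this property.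

* The transvection `d ↦ d e`, defined when `e` dominates `d`: the link of `d` lies in the star of
  `e`. Its `n`-th power sends `d` to an element with exponent sum `n` in `e`, whereas inner
  automorphisms preserve exponent sums.
* The conjugation by `d` of the generators in a set `s`, the others being fixed, defined when every
  edge leaving `s` ends in the star of `d`, and for which both `s` and its complement have a vertex
  outside that star, say `c` and `e`. Send `d` to `T`, both `c` and `e` to `S`, and the other
  generators to `1` in `SL(2, ℤ)`: if the `n`-th power were inner, `T ^ n` would commute with `S`.

Suppose now that `d` is not joined to `c`. If the component of `d` has a vertex `e` outside the star
of `d`, conjugate everything outside that component by `d`. Otherwise `d` dominates each of its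
neighbours, and if it has none then `d` is itself dominated by `c`.
-/

section OuterAutomorphisms

variable {G : Type*} [Group G]

theorem not_isMulTorsion_out_of_pow_ne_conj (φ : MulAut G)
    (hφ : ∀ n ≠ 0, ∀ g : G, φ ^ n ≠ MulAut.conj g) : ¬ IsMulTorsion (Out G) := by
  intro htorsion
  obtain ⟨n, hn, hpow⟩ := isOfFinOrder_iff_pow_eq_one.1
    (htorsion (QuotientGroup.mk' (MulAut.conj : G →* MulAut G).range φ))
  obtain ⟨g, hg⟩ : φ ^ n ∈ (MulAut.conj : G →* MulAut G).range :=
    (QuotientGroup.eq_one_iff _).1 hpow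
  exact hφ n hn.ne' g hg.symm

theorem mulAut_pow_apply_of_apply_eq_self {φ : MulAut G} {x : G} (hx : φ x = x) (n : ℕ) :
    (φ ^ n) x = x :=
  pow_mem (show φ ∈ MulAction.stabilizer (MulAut G) x from hx) n

theorem mulAut_pow_apply_of_apply_eq_mul {φ : MulAut G} {a x : G} (ha : φ a = a)
    (hx : φ x = x * a) (n : ℕ) : (φ ^ n) x = x * a ^ n := by
  induction n with
  | zero => simp
  | succ n ih =>
    rw [pow_succ', MulAut.mul_apply, ih, map_mul, map_pow, ha, hx, mul_assoc, pow_succ']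

theorem mulAut_pow_apply_of_apply_eq_conj {φ : MulAut G} {a x : G} (ha : φ a = a)
    (hx : φ x = a * x * a⁻¹) (n : ℕ) : (φ ^ n) x = a ^ n * x * (a ^ n)⁻¹ := by
  induction n with
  | zero => simp
  | succ n ih =>
    rw [pow_succ', MulAut.mul_apply, ih]
    simp only [map_mul, map_inv, map_pow, ha, hx]
    group

end OuterAutomorphisms

theorem eq_zero_of_commute_T_pow_S {n : ℕ} (h : Commute (ModularGroup.T ^ n) ModularGroup.S) :
    n = 0 := by
  have entry := congrArg (fun M : Matrix.SpecialLinearGroup (Fin 2) ℤ => M.1 0 0) h.eq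
  simpa [← zpow_natCast, ModularGroup.coe_T_zpow, ModularGroup.coe_S] using entry

namespace RAAG

variable {V : Type*} {Γ : SimpleGraph V} {H : Type*} [Group H] {c d e : V} {s : Set V}

/-- The standard generator of `RAAG Γ` at a vertex. -/
abbrev gen (Γ : SimpleGraph V) (v : V) : RAAG Γ := PresentedGroup.of v

/-- The star of a vertex: the vertex together with its link `Γ.neighborSet v`. -/
def vertexStar (Γ : SimpleGraph V) (v : V) : Set V := insert v (Γ.neighborSet v)

theorem commute_gen_of_adj {v w : V} (h : Γ.Adj v w) : Commute (gen Γ v) (gen Γ w) := by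
  have relator : PresentedGroup.mk (raagRels Γ) ⁅FreeGroup.of v, FreeGroup.of w⁆ = 1 :=
    PresentedGroup.one_of_mem ⟨v, w, h, rfl⟩
  rw [map_commutatorElement] at relator
  exact commutatorElement_eq_one_iff_commute.1 relator

theorem commute_gen_of_mem_vertexStar {v w : V} (h : w ∈ vertexStar Γ v) :
    Commute (gen Γ v) (gen Γ w) := by
  rcases h with rfl | h
  · exact Commute.refl _
  · exact commute_gen_of_adj h

/-- The universal property of `RAAG Γ`: a map on vertices sending adjacent vertices to commuting
elements extends to a homomorphism. -/
def lift (f : V → H) (hf : ∀ ⦃v w⦄, Γ.Adj v w → Commute (f v) (f w)) : RAAG Γ →* H :=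
  PresentedGroup.toGroup (f := f) <| by
    rintro _ ⟨v, w, hvw, rfl⟩
    simpa [map_commutatorElement] using commutatorElement_eq_one_iff_commute.2 (hf hvw)

@[simp]
theorem lift_gen (f : V → H) (hf : ∀ ⦃v w⦄, Γ.Adj v w → Commute (f v) (f w)) (v : V) :
    lift f hf (gen Γ v) = f v :=
  PresentedGroup.toGroup.of _

theorem commute_update_of_adj [DecidableEq V] {f : V → H} {x : H}
    (hf : ∀ ⦃v w⦄, Γ.Adj v w → Commute (f v) (f w)) (hx : ∀ ⦃w⦄, Γ.Adj d w → Commute x (f w))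
    ⦃v w : V⦄ (hvw : Γ.Adj v w) :
    Commute (Function.update f d x v) (Function.update f d x w) := by
  by_cases hv : v = d
  · subst hv
    simpa [hvw.ne'] using hx hvw
  · by_cases hw : w = d
    · subst hw
      simpa [hv] using (hx hvw.symm).symm
    · simpa [hv, hw] using hf hvw

section Transvection

variable [DecidableEq V]

/-- The endomorphism `d ↦ d * e ^ k` fixing the other generators, for `e` dominating `d`. -/
def transvectionHom (hlink : Γ.neighborSet d ⊆ vertexStar Γ e) (k : ℤ) : RAAG Γ →* RAAG Γ :=
  lift (Function.update (gen Γ) d (gen Γ d * gen Γ e ^ k)) <|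
    commute_update_of_adj (fun _ _ => commute_gen_of_adj) fun _ hw =>
      (commute_gen_of_adj hw).mul_left ((commute_gen_of_mem_vertexStar (hlink hw)).zpow_left k)

theorem transvectionHom_gen_self (hlink : Γ.neighborSet d ⊆ vertexStar Γ e) (k : ℤ) :
    transvectionHom hlink k (gen Γ d) = gen Γ d * gen Γ e ^ k := by
  simp [transvectionHom]

theorem transvectionHom_gen_of_ne (hlink : Γ.neighborSet d ⊆ vertexStar Γ e) (k : ℤ) {v : V}
    (hv : v ≠ d) : transvectionHom hlink k (gen Γ v) = gen Γ v := by
  simp [transvectionHom, hv]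

theorem transvectionHom_comp_neg (hlink : Γ.neighborSet d ⊆ vertexStar Γ e) (hne : d ≠ e) (k : ℤ) :
    (transvectionHom hlink k).comp (transvectionHom hlink (-k)) = MonoidHom.id _ := by
  refine PresentedGroup.ext fun v => ?_
  change transvectionHom hlink k (transvectionHom hlink (-k) (gen Γ v)) = gen Γ v
  by_cases hv : v = d
  · subst hv
    simp only [transvectionHom_gen_self, map_mul, map_zpow, transvectionHom_gen_of_ne _ _ hne.symm]
    group
  · simp only [transvectionHom_gen_of_ne _ _ hv]

/-- The transvection `d ↦ d * e`, for `e` dominating `d`. -/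
def transvection (hlink : Γ.neighborSet d ⊆ vertexStar Γ e) (hne : d ≠ e) : MulAut (RAAG Γ) :=
  MonoidHom.toMulEquiv (transvectionHom hlink 1) (transvectionHom hlink (-1))
    (transvectionHom_comp_neg hlink hne (-1)) (transvectionHom_comp_neg hlink hne 1)

theorem transvection_pow_gen_self (hlink : Γ.neighborSet d ⊆ vertexStar Γ e) (hne : d ≠ e)
    (n : ℕ) : (transvection hlink hne ^ n) (gen Γ d) = gen Γ d * gen Γ e ^ n :=
  mulAut_pow_apply_of_apply_eq_mul (transvectionHom_gen_of_ne hlink 1 hne.symm)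
    ((transvectionHom_gen_self hlink 1).trans (by rw [zpow_one])) n

/-- The exponent sum of the generator at `e`, as a homomorphism to `ℤ`. -/
def exponentSum (Γ : SimpleGraph V) (e : V) : RAAG Γ →* Multiplicative ℤ :=
  lift (Pi.mulSingle e (Multiplicative.ofAdd 1)) fun _ _ _ => Commute.all _ _

theorem transvection_pow_ne_conj (hlink : Γ.neighborSet d ⊆ vertexStar Γ e) (hne : d ≠ e)
    {n : ℕ} (hn : n ≠ 0) (g : RAAG Γ) : transvection hlink hne ^ n ≠ MulAut.conj g := by
  intro hconj
  have image_d : gen Γ d * gen Γ e ^ n = g * gen Γ d * g⁻¹ := by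
    rw [← transvection_pow_gen_self hlink hne, hconj, MulAut.conj_apply]
  have sums := congrArg (exponentSum Γ e) image_d
  simp only [map_mul, map_pow, map_inv, mul_inv_cancel_comm, mul_eq_left] at sums
  simp [exponentSum, ← ofAdd_nsmul, hn] at sums

end Transvection

section PartialConjugation

variable [∀ v, Decidable (v ∈ s)]

/-- The endomorphism conjugating the generators in `s` by `d ^ k` and fixing the others, where every
edge leaving `s` ends in the star of `d`. -/
def partialConjHom (hs : ∀ ⦃v w⦄, Γ.Adj v w → v ∈ s → w ∉ s → w ∈ vertexStar Γ d) (k : ℤ) :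
    RAAG Γ →* RAAG Γ :=
  lift (s.piecewise (fun v => gen Γ d ^ k * gen Γ v * (gen Γ d ^ k)⁻¹) (gen Γ)) <| by
    have commute_of_leaving {v w : V} (hvw : Γ.Adj v w) (hv : v ∈ s) (hw : w ∉ s) :
        Commute (gen Γ d ^ k * gen Γ v * (gen Γ d ^ k)⁻¹) (gen Γ w) :=
      have hdw := (commute_gen_of_mem_vertexStar (hs hvw hv hw)).zpow_left k
      (hdw.mul_left (commute_gen_of_adj hvw)).mul_left hdw.inv_left
    intro v w hvw
    by_cases hv : v ∈ s <;> by_cases hw : w ∈ s <;> simp only [hv, hw, not_false_eq_true,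
      Set.piecewise_eq_of_mem, Set.piecewise_eq_of_notMem]
    · exact (Commute.conj_iff _).2 (commute_gen_of_adj hvw)
    · exact commute_of_leaving hvw hv hw
    · exact (commute_of_leaving hvw.symm hw hv).symm
    · exact commute_gen_of_adj hvw

variable (hs : ∀ ⦃v w⦄, Γ.Adj v w → v ∈ s → w ∉ s → w ∈ vertexStar Γ d)

theorem partialConjHom_gen_of_mem (k : ℤ) {v : V} (hv : v ∈ s) :
    partialConjHom hs k (gen Γ v) = gen Γ d ^ k * gen Γ v * (gen Γ d ^ k)⁻¹ := by
  simp [partialConjHom, hv]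

theorem partialConjHom_gen_of_notMem (k : ℤ) {v : V} (hv : v ∉ s) :
    partialConjHom hs k (gen Γ v) = gen Γ v := by
  simp [partialConjHom, hv]

theorem partialConjHom_comp_neg (hd : d ∉ s) (k : ℤ) :
    (partialConjHom hs k).comp (partialConjHom hs (-k)) = MonoidHom.id _ := by
  refine PresentedGroup.ext fun v => ?_
  change partialConjHom hs k (partialConjHom hs (-k) (gen Γ v)) = gen Γ v
  by_cases hv : v ∈ s
  · simp only [partialConjHom_gen_of_mem _ _ hv, map_mul, map_inv, map_zpow,
      partialConjHom_gen_of_notMem _ _ hd]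
    group
  · simp only [partialConjHom_gen_of_notMem _ _ hv]

/-- The partial conjugation by `d` of the generators in `s`. Classically `s` is a component of the
complement of the star of `d`; here `s` may be any set whose leaving edges end in that star. -/
def partialConj (hd : d ∉ s) : MulAut (RAAG Γ) :=
  MonoidHom.toMulEquiv (partialConjHom hs 1) (partialConjHom hs (-1))
    (partialConjHom_comp_neg hs hd (-1)) (partialConjHom_comp_neg hs hd 1)

theorem partialConj_pow_gen_of_mem (hd : d ∉ s) (hc : c ∈ s) (n : ℕ) :
    (partialConj hs hd ^ n) (gen Γ c) = gen Γ d ^ n * gen Γ c * (gen Γ d ^ n)⁻¹ :=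
  mulAut_pow_apply_of_apply_eq_conj (partialConjHom_gen_of_notMem hs 1 hd)
    ((partialConjHom_gen_of_mem hs 1 hc).trans (by rw [zpow_one])) n

theorem partialConj_pow_gen_of_notMem (hd : d ∉ s) (he : e ∉ s) (n : ℕ) :
    (partialConj hs hd ^ n) (gen Γ e) = gen Γ e :=
  mulAut_pow_apply_of_apply_eq_self (partialConjHom_gen_of_notMem hs 1 he) n

end PartialConjugation

theorem exists_hom_gen_eq_T_and_gen_eq_S (hc : c ∉ vertexStar Γ d) (he : e ∉ vertexStar Γ d) :
    ∃ ρ : RAAG Γ →* Matrix.SpecialLinearGroup (Fin 2) ℤ,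
      ρ (gen Γ d) = ModularGroup.T ∧ ρ (gen Γ c) = ModularGroup.S ∧
        ρ (gen Γ e) = ModularGroup.S := by
  classical
  let f : V → Matrix.SpecialLinearGroup (Fin 2) ℤ :=
    Set.mulIndicator {c, e} fun _ => ModularGroup.S
  have hf ⦃v w : V⦄ (_ : Γ.Adj v w) : Commute (f v) (f w) := by
    by_cases hv : v ∈ ({c, e} : Set V) <;> by_cases hw : w ∈ ({c, e} : Set V) <;>
      simp [f, hv, hw]
  have hT ⦃w : V⦄ (hw : Γ.Adj d w) : Commute ModularGroup.T (f w) := by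
    have hw' : w ∉ ({c, e} : Set V) := by
      rintro (rfl | rfl)
      · exact hc (Or.inr hw)
      · exact he (Or.inr hw)
    simp [f, hw']
  have hcd : c ≠ d := fun h => hc (Or.inl h)
  have hed : e ≠ d := fun h => he (Or.inl h)
  exact ⟨lift (Function.update f d ModularGroup.T) (commute_update_of_adj hf hT),
    by simp, by simp [hcd, f], by simp [hed, f]⟩

theorem partialConj_pow_ne_conj [∀ v, Decidable (v ∈ s)]
    (hs : ∀ ⦃v w⦄, Γ.Adj v w → v ∈ s → w ∉ s → w ∈ vertexStar Γ d) (hd : d ∉ s)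
    (hcs : c ∈ s) (hc : c ∉ vertexStar Γ d) (hes : e ∉ s) (he : e ∉ vertexStar Γ d)
    {n : ℕ} (hn : n ≠ 0) (g : RAAG Γ) : partialConj hs hd ^ n ≠ MulAut.conj g := by
  intro hconj
  have image_c : gen Γ d ^ n * gen Γ c * (gen Γ d ^ n)⁻¹ = g * gen Γ c * g⁻¹ := by
    rw [← partialConj_pow_gen_of_mem hs hd hcs, hconj, MulAut.conj_apply]
  have image_e : gen Γ e = g * gen Γ e * g⁻¹ := by
    rw [← MulAut.conj_apply, ← hconj, partialConj_pow_gen_of_notMem hs hd hes]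
  obtain ⟨ρ, hρd, hρc, hρe⟩ := exists_hom_gen_eq_T_and_gen_eq_S hc he
  have conj_S : ModularGroup.T ^ n * ModularGroup.S * (ModularGroup.T ^ n)⁻¹ = ModularGroup.S :=
    calc
      _ = ρ (gen Γ d ^ n * gen Γ c * (gen Γ d ^ n)⁻¹) := by
        simp only [map_mul, map_pow, map_inv, hρd, hρc]
      _ = ρ (g * gen Γ e * g⁻¹) := by simp only [image_c, map_mul, map_inv, hρc, hρe]
      _ = ModularGroup.S := by rw [← image_e, hρe]
  exact hn (eq_zero_of_commute_T_pow_S (mul_inv_eq_iff_eq_mul.1 conj_S))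

theorem not_isMulTorsion_out_of_neighborSet_subset (hlink : Γ.neighborSet d ⊆ vertexStar Γ e)
    (hne : d ≠ e) : ¬ IsMulTorsion (Out (RAAG Γ)) := by
  classical
  exact not_isMulTorsion_out_of_pow_ne_conj _ fun _ => transvection_pow_ne_conj hlink hne

theorem not_isMulTorsion_out_of_separating_vertexStar
    (hs : ∀ ⦃v w⦄, Γ.Adj v w → v ∈ s → w ∉ s → w ∈ vertexStar Γ d) (hd : d ∉ s)
    (hcs : c ∈ s) (hc : c ∉ vertexStar Γ d) (hes : e ∉ s) (he : e ∉ vertexStar Γ d) :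
    ¬ IsMulTorsion (Out (RAAG Γ)) := by
  classical
  exact not_isMulTorsion_out_of_pow_ne_conj _ fun _ =>
    partialConj_pow_ne_conj hs hd hcs hc hes he

theorem reachable_of_mem_vertexStar {v : V} (h : v ∈ vertexStar Γ d) : Γ.Reachable d v := by
  rcases h with rfl | h
  · exact SimpleGraph.Reachable.refl _
  · exact SimpleGraph.Adj.reachable h

end RAAG

open RAAG in
theorem connected_of_out_raag_finite_general {V : Type*} [Nonempty V] (Γ : SimpleGraph V)
    (h : IsMulTorsion (Out (RAAG Γ))) : Γ.Connected := by
  refine { preconnected := fun d c => ?_ }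
  by_contra hdc
  have hc : c ∉ vertexStar Γ d := fun hc => hdc (reachable_of_mem_vertexStar hc)
  by_cases component : ∃ e, Γ.Reachable d e ∧ e ∉ vertexStar Γ d
  · obtain ⟨e, hde, he⟩ := component
    have no_leaving_edge ⦃v w : V⦄ (hvw : Γ.Adj v w) (hv : ¬ Γ.Reachable d v)
        (hw : ¬ ¬ Γ.Reachable d w) : w ∈ vertexStar Γ d :=
      (hv ((not_not.1 hw).trans hvw.symm.reachable)).elim
    exact not_isMulTorsion_out_of_separating_vertexStar (s := {v | ¬ Γ.Reachable d v})
      no_leaving_edge (not_not.2 (SimpleGraph.Reachable.refl d)) hdc hc (not_not.2 hde) he h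
  · push Not at component
    by_cases neighbour : ∃ f, Γ.Adj d f
    · obtain ⟨f, hf⟩ := neighbour
      exact not_isMulTorsion_out_of_neighborSet_subset
        (fun w hw => component w (hf.reachable.trans (SimpleGraph.Adj.reachable hw))) hf.ne' h
    · exact not_isMulTorsion_out_of_neighborSet_subset (d := d) (e := c)
        (fun w hw => (neighbour ⟨w, hw⟩).elim) (fun hdc => hc (Or.inl hdc.symm)) h

theorem connected_of_out_raag_finite {V : Type} [Fintype V] [Nonempty V]
    (Γ : SimpleGraph V) (h : Finite (Out (RAAG Γ))) :
    Γ.Connected :=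
  connected_of_out_raag_finite_general Γ isMulTorsion_of_finite
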